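/- arXiv:1311.2295 — 4 statements merged into one kernel-verified Lean document; each statement's English description precedes it below -/
import Mathlib

section
/- Let m ≥ 2 be an integer, ε = exp(2πi/m) and κ = exp(iπ/m). For every x ∈ ℂ and every 0 ≤ l ≤ m-1, the type-l component of the exponential function x ↦ e^{κx} is p_l(e^{κ·})(x) = κ^l sin_{m,l}(x) (where sin_{m,0} = cos_m). Consequently, e^{κx} = cos_m(x) + ∑_{l=1}^{m-1} κ^l sin_{m,l}(x) for all x ∈ ℂ. -/
/-!
Expand `e^{κx} = ∑ k, (κx)^k / k!` and look at the exponents `k ≡ l (mod m)`.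

* Since `κ^m = -1`, the subseries over `k = nm + l` is `κ^l sin_{m,l}(x)`
  (`hasSum_residue_sinml`).
* By orthogonality of the `m`-th roots of unity (`sum_eps_orthogonality`), averaging
  `ε^{-lj} e^{κ ε^j x}` over `j` keeps exactly the terms with `k ≡ l (mod m)`, so the same
  subseries sums to `p_l(e^{κ·})(x)` (`hasSum_residue_proj`).

Uniqueness of sums gives the first claim, and adding the subseries over all residues `l`
recovers the whole exponential series, which gives the second.
-/

/-- `ε = exp(2πi/m)`, a primitive `m`-th root of unity. -/
noncomputable def eps (m : ℕ) : ℂ := Complex.exp (2 * Real.pi * Complex.I / m)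

/-- `κ = exp(iπ/m)`. -/
noncomputable def kappa (m : ℕ) : ℂ := Complex.exp (Real.pi * Complex.I / m)

/-- The projection operator `p_l(f)(x) = (1/m) ∑_{j=0}^{m-1} ε^{-lj} f(ε^j x)`. -/
noncomputable def proj (m : ℕ) (l : ℤ) (f : ℂ → ℂ) (x : ℂ) : ℂ :=
  (m : ℂ)⁻¹ * ∑ j ∈ Finset.range m, eps m ^ (-(l * j)) * f (eps m ^ j * x)

/-- The hyper-trigonometric function
`sin_{m,l}(x) = ∑_{n=0}^∞ (-1)^n x^(nm+l)/(nm+l)!`; for `l = 0` this is `cos_m`. -/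
noncomputable def sinml (m l : ℕ) (x : ℂ) : ℂ :=
  ∑' n : ℕ, (-1) ^ n * x ^ (n * m + l) / (Nat.factorial (n * m + l) : ℂ)

lemma kappa_pow_self {m : ℕ} (hm : m ≠ 0) : kappa m ^ m = -1 := by
  have h : (m : ℂ) ≠ 0 := by exact_mod_cast hm
  rw [kappa, ← Complex.exp_nat_mul, mul_div_cancel₀ _ h, Complex.exp_pi_mul_I]

lemma hasSum_exp (z : ℂ) : HasSum (fun k : ℕ => z ^ k / (k.factorial : ℂ)) (Complex.exp z) := by
  rw [Complex.exp_eq_exp_ℂ]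
  exact NormedSpace.expSeries_div_hasSum_exp z

/-- The part of the series of `e^{κx}` with exponents congruent to `l` modulo `m` sums to
`κ^l sin_{m,l}(x)`. -/
lemma hasSum_residue_sinml {m l : ℕ} (hl : l < m) (x : ℂ) :
    HasSum (fun k : ℕ => if k % m = l then (kappa m * x) ^ k / (k.factorial : ℂ) else 0)
      (kappa m ^ l * sinml m l x) := by
  have hm : m ≠ 0 := by omega
  have hinj : Function.Injective (fun n : ℕ => n * m + l) := by
    intro a b h
    have h' : a * m = b * m := by simpa using h
    exact Nat.eq_of_mul_eq_mul_right (Nat.pos_of_ne_zero hm) h'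
  have hsum : Summable (fun n : ℕ =>
      (kappa m * x) ^ (n * m + l) / ((n * m + l).factorial : ℂ)) :=
    (hasSum_exp (kappa m * x)).summable.comp_injective hinj
  have hterm : ∀ n : ℕ, (kappa m * x) ^ (n * m + l) / ((n * m + l).factorial : ℂ) =
      kappa m ^ l * ((-1) ^ n * x ^ (n * m + l) / ((n * m + l).factorial : ℂ)) := by
    intro n
    have hk : kappa m ^ (n * m + l) = (-1) ^ n * kappa m ^ l := by
      rw [pow_add, mul_comm n m, pow_mul, kappa_pow_self hm]
    rw [mul_pow, hk]
    ring
  have hval : HasSum (fun n : ℕ => (kappa m * x) ^ (n * m + l) / ((n * m + l).factorial : ℂ))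
      (kappa m ^ l * sinml m l x) := by
    have h := hsum.hasSum
    rwa [tsum_congr hterm, tsum_mul_left] at h
  rw [← hinj.hasSum_iff]
  · convert hval using 2 with n
    simp [Nat.mod_eq_of_lt hl]
  · intro k hk
    refine if_neg fun hkl => hk ⟨k / m, ?_⟩
    have := Nat.div_add_mod' k m
    simp only
    omega

lemma sum_eps_orthogonality {m l : ℕ} (hl : l < m) (k : ℕ) :
    (m : ℂ)⁻¹ * ∑ j ∈ Finset.range m, eps m ^ (-((l : ℤ) * j)) * (eps m ^ j) ^ k =
      if k % m = l then 1 else 0 := by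
  have hm : m ≠ 0 := by omega
  have hm' : (m : ℂ) ≠ 0 := by exact_mod_cast hm
  have hprim : IsPrimitiveRoot (eps m) m := Complex.isPrimitiveRoot_exp m hm
  have h0 : eps m ≠ 0 := Complex.exp_ne_zero _
  -- The sum is geometric with ratio `ε^(k-l)`.
  have hgeom : ∀ j : ℕ, eps m ^ (-((l : ℤ) * j)) * (eps m ^ j) ^ k =
      (eps m ^ ((k : ℤ) - l)) ^ j := by
    intro j
    rw [← pow_mul, ← zpow_natCast, ← zpow_natCast, ← zpow_add₀ h0, ← zpow_mul]
    congr 1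
    push_cast
    ring
  have hone : eps m ^ ((k : ℤ) - l) = 1 ↔ k % m = l := by
    rw [hprim.zpow_eq_one_iff_dvd, ← Nat.modEq_iff_dvd, Nat.ModEq, Nat.mod_eq_of_lt hl, eq_comm]
  simp only [hgeom]
  split_ifs with h
  · simp [hone.2 h, hm']
  · have hr : eps m ^ ((k : ℤ) - l) ≠ 1 := fun h' => h (hone.1 h')
    have hrm : (eps m ^ ((k : ℤ) - l)) ^ m = 1 := by
      rw [← zpow_natCast, zpow_comm, zpow_natCast, hprim.pow_eq_one, one_zpow]
    rw [geom_sum_eq hr, hrm, sub_self, zero_div, mul_zero]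

/-- The part of the series of `e^{κx}` with exponents congruent to `l` modulo `m` sums to
`p_l(e^{κ·})(x)`. -/
lemma hasSum_residue_proj {m l : ℕ} (hl : l < m) (x : ℂ) :
    HasSum (fun k : ℕ => if k % m = l then (kappa m * x) ^ k / (k.factorial : ℂ) else 0)
      (proj m l (fun y => Complex.exp (kappa m * y)) x) := by
  have h := (hasSum_sum (s := Finset.range m) fun j _ =>
    (hasSum_exp (kappa m * (eps m ^ j * x))).mul_left (eps m ^ (-((l : ℤ) * j)))).mul_left
      (m : ℂ)⁻¹
  refine h.congr_fun ?_
  intro k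
  rw [← mul_one_div, ← boole_mul, ← sum_eps_orthogonality hl k, mul_assoc, Finset.sum_mul]
  congr 1
  refine Finset.sum_congr rfl fun j _ => ?_
  ring

/-- The type-`l` component of `x ↦ e^{κx}` is `κ^l sin_{m,l}(x)`, and consequently
`e^{κx} = cos_m(x) + ∑_{l=1}^{m-1} κ^l sin_{m,l}(x)`. -/
theorem exp_decomposition_hyper_trig (m : ℕ) (hm : 2 ≤ m) (x : ℂ) :
    (∀ l < m, proj m l (fun y => Complex.exp (kappa m * y)) x = kappa m ^ l * sinml m l x) ∧
    Complex.exp (kappa m * x) =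
      sinml m 0 x + ∑ l ∈ Finset.Icc 1 (m - 1), kappa m ^ l * sinml m l x := by
  refine ⟨fun l hl => (hasSum_residue_proj hl x).unique (hasSum_residue_sinml hl x), ?_⟩
  have hsum := hasSum_sum (s := Finset.range m) fun l hl =>
    hasSum_residue_sinml (Finset.mem_range.1 hl) x
  have hexp : Complex.exp (kappa m * x) =
      ∑ l ∈ Finset.range m, kappa m ^ l * sinml m l x := by
    refine (hasSum_exp (kappa m * x)).unique ?_
    convert hsum using 2 with k
    simp [Nat.mod_lt k (by omega : 0 < m)]
  have hset : Finset.range m = insert 0 (Finset.Icc 1 (m - 1)) := by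
    ext l
    simp only [Finset.mem_range, Finset.mem_insert, Finset.mem_Icc]
    omega
  rw [hexp, hset, Finset.sum_insert (by simp), pow_zero, one_mul]
end

section
/- Let m ≥ 2 be an integer and λ ∈ ℂ. The function y : ℝ → ℂ defined by y(x) = cos_m(λx) is a C^∞ solution of the initial value problem y^{(m)}(x) = -λ^m y(x) for all x ∈ ℝ, with y(0) = 1 and y^{(1)}(0) = ⋯ = y^{(m-1)}(0) = 0; moreover it is the unique C^∞ function on ℝ satisfying this problem. -/
/-!
Write `cos_m(λx) = ∑ a_k x^k / k!`, where `a_k = (-1)^(k/m) λ^k` if `m ∣ k` and `a_k = 0` otherwise.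
Exponential generating functions of sequences of at most geometric growth may be differentiated
term by term, and differentiation acts on them as the shift of the coefficient sequence
(`hasDerivAt_egf`). Smoothness follows, the `j`-th derivative at `0` is `a_j`, and the
differential equation is the recurrence `a_{k+m} = -λ^m a_k`.

For uniqueness, the vector `(y, y', …, y^{(m-1)})` of a solution satisfies a first order linear
system with constant coefficients, whose solutions are determined by their value at `0`.
-/

/-- The hyper-cosine function `cos_m(x) = ∑_{n=0}^∞ (-1)^n x^(nm)/(nm)!`. -/
noncomputable def cosm (m : ℕ) (x : ℂ) : ℂ :=
  ∑' n : ℕ, (-1) ^ n * x ^ (n * m) / (Nat.factorial (n * m) : ℂ)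

/-- The exponential generating function `∑ a_k x^k / k!` of `a`, as a function of a real variable. -/
noncomputable def egf (a : ℕ → ℂ) (x : ℝ) : ℂ :=
  ∑' k : ℕ, a k * ((x : ℂ) ^ k / (Nat.factorial k : ℂ))

/-- The sequence `a` grows at most geometrically. -/
def GeomBounded (a : ℕ → ℂ) : Prop :=
  ∃ D C : ℝ, ∀ k, ‖a k‖ ≤ D * C ^ k

theorem GeomBounded.shift {a : ℕ → ℂ} (ha : GeomBounded a) (n : ℕ) :
    GeomBounded fun k => a (k + n) := by
  obtain ⟨D, C, h⟩ := ha
  exact ⟨D * C ^ n, C, fun k => (h (k + n)).trans_eq (by ring)⟩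

theorem norm_egf_term_le {a : ℕ → ℂ} {D C : ℝ} (h : ∀ k, ‖a k‖ ≤ D * C ^ k) {x R : ℝ}
    (hx : |x| ≤ R) (k : ℕ) :
    ‖a k * ((x : ℂ) ^ k / (Nat.factorial k : ℂ))‖ ≤ D * ((C * R) ^ k / (Nat.factorial k : ℝ)) := by
  have h1 : ‖a k * ((x : ℂ) ^ k / (Nat.factorial k : ℂ))‖
      = ‖a k‖ * (|x| ^ k / (Nat.factorial k : ℝ)) := by simp
  have h2 : D * ((C * R) ^ k / (Nat.factorial k : ℝ))
      = (D * C ^ k) * (R ^ k / (Nat.factorial k : ℝ)) := by ring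
  rw [h1, h2]
  have h3 : |x| ^ k / (Nat.factorial k : ℝ) ≤ R ^ k / (Nat.factorial k : ℝ) := by gcongr
  exact mul_le_mul (h k) h3 (by positivity) ((norm_nonneg _).trans (h k))

theorem GeomBounded.summable {a : ℕ → ℂ} (ha : GeomBounded a) (x : ℝ) :
    Summable fun k : ℕ => a k * ((x : ℂ) ^ k / (Nat.factorial k : ℂ)) := by
  obtain ⟨D, C, h⟩ := ha
  exact Summable.of_norm_bounded ((Real.summable_pow_div_factorial (C * |x|)).mul_left D)
    (norm_egf_term_le h le_rfl)

theorem egf_zero (a : ℕ → ℂ) : egf a 0 = a 0 := by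
  rw [egf, tsum_eq_single 0]
  · simp
  · intro k hk
    simp [hk]

theorem hasDerivAt_egf {a : ℕ → ℂ} (ha : GeomBounded a) (x : ℝ) :
    HasDerivAt (egf a) (egf (fun k => a (k + 1)) x) x := by
  -- Splitting off the constant term makes the derivative of the `k`-th remaining term the
  -- `k`-th term of the shifted series.
  have hsplit : egf a = fun x : ℝ => a 0 +
      ∑' k : ℕ, a (k + 1) * ((x : ℂ) ^ (k + 1) / (Nat.factorial (k + 1) : ℂ)) := by
    funext x
    rw [egf, (ha.summable x).tsum_eq_zero_add]
    simp
  rw [hsplit]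
  refine HasDerivAt.const_add _ ?_
  obtain ⟨D, C, h⟩ := ha.shift 1
  refine hasDerivAt_tsum_of_isPreconnected
    (t := Metric.ball (0 : ℝ) (|x| + 1)) (y₀ := 0)
    (g' := fun k (x : ℝ) => a (k + 1) * ((x : ℂ) ^ k / (Nat.factorial k : ℂ)))
    ((Real.summable_pow_div_factorial (C * (|x| + 1))).mul_left D)
    Metric.isOpen_ball (convex_ball _ _).isPreconnected ?_ ?_ ?_ ?_ ?_
  · intro k z _
    have h1 : HasDerivAt (fun z : ℝ => (z : ℂ) ^ (k + 1)) (((k + 1 : ℕ) : ℂ) * (z : ℂ) ^ k) z := by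
      simpa using ((hasDerivAt_id z).ofReal_comp).fun_pow (k + 1)
    refine ((h1.div_const (Nat.factorial (k + 1) : ℂ)).const_mul (a (k + 1))).congr_deriv ?_
    have h2 : (Nat.factorial k : ℂ) ≠ 0 := by exact_mod_cast Nat.factorial_ne_zero k
    have h3 : ((k : ℂ) + 1) ≠ 0 := by exact_mod_cast Nat.succ_ne_zero k
    rw [Nat.factorial_succ]
    push_cast
    field_simp
  · intro k z hz
    exact norm_egf_term_le h (by simpa using (mem_ball_zero_iff.1 hz).le) k
  · exact Metric.mem_ball_self (by positivity)
  · simp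
  · simp

theorem iteratedDeriv_egf {a : ℕ → ℂ} (ha : GeomBounded a) (n : ℕ) :
    iteratedDeriv n (egf a) = egf fun k => a (k + n) := by
  induction n with
  | zero => simp
  | succ n ih =>
    rw [iteratedDeriv_succ, ih]
    funext x
    rw [(hasDerivAt_egf (ha.shift n) x).deriv]
    simp only [add_assoc, add_comm 1 n]

theorem contDiff_egf {a : ℕ → ℂ} (ha : GeomBounded a) : ContDiff ℝ (⊤ : ℕ∞) (egf a) := by
  refine contDiff_of_differentiable_iteratedDeriv fun n _ => ?_
  rw [iteratedDeriv_egf ha]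
  exact fun x => (hasDerivAt_egf (ha.shift n) x).differentiableAt

/-- The Taylor coefficients (multiplied by `k!`) of `x ↦ cos_m(λx)`. -/
noncomputable def cosCoeff (m : ℕ) (lam : ℂ) (k : ℕ) : ℂ :=
  if m ∣ k then (-1) ^ (k / m) * lam ^ k else 0

theorem geomBounded_cosCoeff (m : ℕ) (lam : ℂ) : GeomBounded (cosCoeff m lam) := by
  refine ⟨1, ‖lam‖, fun k => ?_⟩
  unfold cosCoeff
  split_ifs
  · simp
  · simp only [norm_zero]
    positivity

theorem cosCoeff_add {m : ℕ} (hm : 0 < m) (lam : ℂ) (k : ℕ) :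
    cosCoeff m lam (k + m) = -lam ^ m * cosCoeff m lam k := by
  unfold cosCoeff
  simp only [Nat.dvd_add_self_right, Nat.add_div_right k hm]
  split_ifs
  · ring
  · simp

theorem cosm_eq_egf {m : ℕ} (hm : 0 < m) (lam : ℂ) :
    (fun x : ℝ => cosm m (lam * x)) = egf (cosCoeff m lam) := by
  funext x
  have hinj : Function.Injective fun n : ℕ => n * m :=
    fun _ _ h => Nat.eq_of_mul_eq_mul_right hm h
  rw [cosm, egf, ← hinj.tsum_eq (f := fun k => cosCoeff m lam k * ((x : ℂ) ^ k / (Nat.factorial k : ℂ)))]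
  · refine tsum_congr fun n => ?_
    simp only [cosCoeff, Nat.dvd_mul_left, if_true, Nat.mul_div_cancel _ hm, mul_pow]
    ring
  · intro k hk
    -- A nonzero term can only occur at a multiple of `m`.
    by_contra hne
    refine hk ?_
    have : ¬ m ∣ k := fun ⟨n, hn⟩ => hne ⟨n, by simp [hn, mul_comm]⟩
    simp [cosCoeff, this]

/-- The companion map of the equation `y^{(m)} = c y`, acting on `(y, y', …, y^{(m-1)})`. -/
def companion (m : ℕ) (hm : 0 < m) (c : ℂ) : (Fin m → ℂ) →ₗ[ℝ] (Fin m → ℂ) where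
  toFun v i := if h : (i : ℕ) + 1 < m then v ⟨i + 1, h⟩ else c * v ⟨0, hm⟩
  map_add' u v := by
    funext i
    simp only [Pi.add_apply]
    split_ifs <;> ring
  map_smul' r v := by
    funext i
    simp only [Pi.smul_apply, RingHom.id_apply]
    split_ifs
    · rfl
    · exact mul_smul_comm r c _

theorem hasDerivAt_jet {m : ℕ} (hm : 0 < m) {c : ℂ} {y : ℝ → ℂ} (hy : ContDiff ℝ (⊤ : ℕ∞) y)
    (hode : ∀ x, iteratedDeriv m y x = c * y x) (t : ℝ) :
    HasDerivAt (fun t (i : Fin m) => iteratedDeriv i y t)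
      (companion m hm c fun i : Fin m => iteratedDeriv i y t) t := by
  rw [hasDerivAt_pi]
  intro i
  have hd : DifferentiableAt ℝ (iteratedDeriv i y) t :=
    hy.differentiable_iteratedDeriv i (by exact_mod_cast ENat.natCast_lt_top _) t
  refine hd.hasDerivAt.congr_deriv ?_
  rw [← iteratedDeriv_succ]
  simp only [companion, LinearMap.coe_mk, AddHom.coe_mk]
  split_ifs with h
  · rfl
  · have : (i : ℕ) + 1 = m := by omega
    rw [this, hode, iteratedDeriv_zero]

/-- Smooth solutions of `y^{(m)} = c y` are determined by their first `m` derivatives at `0`. -/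
theorem solution_unique {m : ℕ} (hm : 0 < m) {c : ℂ} {y z : ℝ → ℂ}
    (hy : ContDiff ℝ (⊤ : ℕ∞) y) (hz : ContDiff ℝ (⊤ : ℕ∞) z)
    (hyo : ∀ x, iteratedDeriv m y x = c * y x) (hzo : ∀ x, iteratedDeriv m z x = c * z x)
    (h0 : ∀ j < m, iteratedDeriv j y 0 = iteratedDeriv j z 0) : y = z := by
  have key := ODE_solution_unique_univ (v := fun _ => companion m hm c) (s := fun _ => Set.univ)
    (K := ‖(companion m hm c).toContinuousLinearMap‖₊) (t₀ := 0)
    (f := fun t (i : Fin m) => iteratedDeriv i y t) (g := fun t (i : Fin m) => iteratedDeriv i z t)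
    (fun _ => ((companion m hm c).toContinuousLinearMap.lipschitz).lipschitzOnWith)
    (fun t => ⟨hasDerivAt_jet hm hy hyo t, Set.mem_univ _⟩)
    (fun t => ⟨hasDerivAt_jet hm hz hzo t, Set.mem_univ _⟩)
    (funext fun i => h0 i i.2)
  funext x
  simpa using congrFun (congrFun key x) ⟨0, hm⟩


/-- `y(x) = cos_m(λx)` is the unique `C^∞` solution on `ℝ` of
`y^{(m)} = -λ^m y`, `y(0) = 1`, `y^{(1)}(0) = ⋯ = y^{(m-1)}(0) = 0`. -/
theorem hyper_cosine_ivp (m : ℕ) (hm : 2 ≤ m) (lam : ℂ) :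
    ContDiff ℝ (⊤ : ℕ∞) (fun x : ℝ => cosm m (lam * x)) ∧
    (∀ x : ℝ, iteratedDeriv m (fun x : ℝ => cosm m (lam * x)) x
        = -lam ^ m * cosm m (lam * x)) ∧
    cosm m (lam * (0 : ℝ)) = 1 ∧
    (∀ j, 1 ≤ j → j ≤ m - 1 →
      iteratedDeriv j (fun x : ℝ => cosm m (lam * x)) 0 = 0) ∧
    (∀ y : ℝ → ℂ, ContDiff ℝ (⊤ : ℕ∞) y →
      (∀ x : ℝ, iteratedDeriv m y x = -lam ^ m * y x) →
      y 0 = 1 →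
      (∀ j, 1 ≤ j → j ≤ m - 1 → iteratedDeriv j y 0 = 0) →
      ∀ x : ℝ, y x = cosm m (lam * x)) := by
  have hm0 : 0 < m := by omega
  have hb := geomBounded_cosCoeff m lam
  have hE := cosm_eq_egf hm0 lam
  have hEx : ∀ x : ℝ, cosm m (lam * x) = egf (cosCoeff m lam) x := congrFun hE
  have hode : ∀ x : ℝ, iteratedDeriv m (egf (cosCoeff m lam)) x
      = -lam ^ m * egf (cosCoeff m lam) x := by
    intro x
    rw [iteratedDeriv_egf hb, egf, egf, ← tsum_mul_left]
    simp only [cosCoeff_add hm0, mul_assoc]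
  have h0 : egf (cosCoeff m lam) 0 = 1 := by
    simp [egf_zero, cosCoeff]
  have hj : ∀ j, 1 ≤ j → j ≤ m - 1 → iteratedDeriv j (egf (cosCoeff m lam)) 0 = 0 := by
    intro j h1 h2
    have : ¬ m ∣ j := Nat.not_dvd_of_pos_of_lt h1 (by omega)
    simp [iteratedDeriv_egf hb, egf_zero, cosCoeff, this]
  simp only [hEx]
  refine ⟨contDiff_egf hb, hode, h0, hj, fun y hy hyo hy0 hyj x => ?_⟩
  refine congrFun (solution_unique hm0 hy (contDiff_egf hb) hyo hode fun j hjm => ?_) x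
  rcases Nat.eq_zero_or_pos j with rfl | hpos
  · simp [hy0, h0]
  · rw [hyj j hpos (by omega), hj j hpos (by omega)]
end

section
/- Let m ≥ 2 be an integer, ν = (ν_1, …, ν_{m-1}) ∈ ℝ^{m-1} with ν_k ≥ -1 + k/m for each k, and λ ∈ ℂ. The function f : ℝ → ℂ defined by f(x) = 𝒥_{ν,m}(λx) is a C^∞ solution of the singular initial value problem B_m f(x) = -λ^m f(x) for all x ≠ 0, with f(0) = 1 and f^{(1)}(0) = ⋯ = f^{(m-1)}(0) = 0; moreover it is the unique C^∞ function on ℝ with these properties. -/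
/-!
`B_m` is a composition of `m` first-order operators `d/dx + c/x`; by the hypothesis on `ν` all
constants `c` are nonnegative (the innermost operator `d/dx` has `c = 0`).

Existence. Such an operator sends `x ^ q` to `(q + c) * x ^ (q - 1)`, so `B_m` sends `x ^ q` to
`q * ∏ (q + m ν_k) * x ^ (q - m)` (`symbol_besselList`), and it may be applied term by term to an
entire power series in `(λ x) ^ m` (`opList_powerSum`). With `q = n m` the recurrence of the Gamma
function turns this into `B_m f = -λ ^ m f` (`besselCoeff_succ`). The same recurrence bounds the
coefficients by `1 / n!`, so the series is entire and `f` is smooth.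

Uniqueness. The difference `g` of two solutions vanishes to order `m` at `0` and satisfies
`B_m g = -λ ^ m g`. Applying fewer than `m` of the factors to `g` gives a function that still tends
to `0` at the origin (`opList_tendsto_zero`), so each factor can be inverted by
`u x = x ^ (-c) * ∫₀ˣ t ^ c * (u' + (c/t) u) dt`, and as `c ≥ 0` this is dominated by plain
integration (`firstOrderOp_integrate`). A bound `A x ^ p / p!` on `B_m g` thus gives
`A x ^ (p + m) / (p + m)!` on `g`; iterating, `‖g x‖ ≤ M ‖λ‖ ^ (n m) x ^ (n m) / (n m)! → 0` for
`x > 0`. Negative `x` are handled by the reflection `x ↦ -x`.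
-/

/-- The normalized hyper-Bessel function with vector index `ν = (ν_1, …, ν_{m-1})`:
`𝒥_{ν,m}(x) = ∑_{n=0}^∞ (-1)^n [∏_{k=1}^{m-1} Γ(ν_k+1)/Γ(ν_k+n+1)] (x/m)^{nm}/n!`. -/
noncomputable def hyperBessel (m : ℕ) (ν : ℕ → ℝ) (x : ℂ) : ℂ :=
  ∑' n : ℕ, (-1) ^ n *
    (∏ k ∈ Finset.Icc 1 (m - 1),
      ((Real.Gamma (ν k + 1) / Real.Gamma (ν k + n + 1) : ℝ) : ℂ)) *
    (x / m) ^ (n * m) / (Nat.factorial n : ℂ)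

/-- The first-order operator `g ↦ g' + (c/x) g` acting on functions `ℝ → ℂ`. -/
noncomputable def firstOrderOp (c : ℂ) (g : ℝ → ℂ) : ℝ → ℂ :=
  fun x => deriv g x + c / (x : ℂ) * g x

/-- The hyper-Bessel operator
`B_m = (d/dx + (mν_1+m-1)/x) ∘ ⋯ ∘ (d/dx + (mν_{m-1}+1)/x) ∘ (d/dx)`,
where `d/dx` is applied first. -/
noncomputable def hyperBesselOp (m : ℕ) (ν : ℕ → ℝ) (g : ℝ → ℂ) : ℝ → ℂ :=
  (((List.range (m - 1)).map
      (fun j => firstOrderOp ((m * ν (j + 1) + m - (j + 1) : ℝ) : ℂ))).foldr (· ∘ ·) id)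
    (deriv g)

open Filter Topology

/-! ### Compositions of first-order operators away from the origin -/

/-- The composition `(d/dx + c₁/x) ∘ ⋯ ∘ (d/dx + c_r/x)` for `L = [c₁, …, c_r]`, so that the last
entry of `L` acts first. -/
noncomputable def opList (L : List ℝ) (g : ℝ → ℂ) : ℝ → ℂ :=
  L.foldr (fun (c : ℝ) u => firstOrderOp (c : ℂ) u) g

/-- The effect of `d/dx + c/x` on `x ^ (-k) * P x`, with the power of `x` pulled out again. -/
theorem firstOrderOp_step {k : ℕ} {c x : ℝ} {u P : ℝ → ℂ} {P' : ℂ} (hx : x ≠ 0)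
    (hu : ∀ y : ℝ, y ≠ 0 → u y = ((y : ℂ) ^ k)⁻¹ * P y) (hP : HasDerivAt P P' x) :
    DifferentiableAt ℝ u x ∧
      firstOrderOp (c : ℂ) u x = ((x : ℂ) ^ (k + 1))⁻¹ * ((c - k) * P x + x * P') := by
  have hxc : (x : ℂ) ≠ 0 := by exact_mod_cast hx
  have h1 : HasDerivAt (fun y : ℝ => ((y : ℂ) ^ k)⁻¹) (-(k * (x : ℂ) ^ (k - 1)) / ((x : ℂ) ^ k) ^ 2) x :=
    ((hasDerivAt_pow k (x : ℂ)).inv (pow_ne_zero _ hxc)).comp_ofReal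
  have hev : u =ᶠ[𝓝 x] fun y : ℝ => ((y : ℂ) ^ k)⁻¹ * P y := by
    filter_upwards [isOpen_ne.mem_nhds hx] with y hy using hu y hy
  have h2 := (h1.mul hP).congr_of_eventuallyEq hev
  refine ⟨h2.differentiableAt, ?_⟩
  unfold firstOrderOp
  rw [h2.deriv, hu x hx]
  rcases k with _ | k
  · simp; field_simp; ring
  · simp only [Nat.add_sub_cancel]
    push_cast
    field_simp
    ring

/-- Away from the origin, `opList L` is an Euler-type operator
`x ^ (-r) * ∑ i ≤ r, a i * x ^ i * (d/dx)^i`, with constants `a i` that do not depend on the function.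
This gives differentiability, linearity and the behaviour at the origin of the intermediate
functions `opList L g`. -/
theorem opList_repr (L : List ℝ) : ∃ a : ℕ → ℂ, ∀ g : ℝ → ℂ, ContDiff ℝ (⊤ : ℕ∞) g →
    ∀ x : ℝ, x ≠ 0 → opList L g x = ((x : ℂ) ^ L.length)⁻¹ *
      ∑ i ∈ Finset.range (L.length + 1), a i * (x : ℂ) ^ i * iteratedDeriv i g x := by
  induction L with
  | nil => exact ⟨fun _ => 1, fun g _ x _ => by simp [opList]⟩
  | cons c L ih =>
    obtain ⟨a, ha⟩ := ih
    refine ⟨fun i => (if i < L.length + 1 then a i * (c - L.length + i) else 0) +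
      (if i = 0 then 0 else a (i - 1)), fun g hg x hx => ?_⟩
    have hP : HasDerivAt (fun y : ℝ => ∑ i ∈ Finset.range (L.length + 1),
        a i * (y : ℂ) ^ i * iteratedDeriv i g y)
        (∑ i ∈ Finset.range (L.length + 1), (a i * (i * (x : ℂ) ^ (i - 1)) * iteratedDeriv i g x +
          a i * (x : ℂ) ^ i * iteratedDeriv (i + 1) g x)) x := by
      refine HasDerivAt.fun_sum fun i _ => ?_
      refine HasDerivAt.mul (((hasDerivAt_pow i (x : ℂ)).comp_ofReal).const_mul _) ?_
      rw [iteratedDeriv_succ]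
      exact ((hg.differentiable_iteratedDeriv i (by exact_mod_cast WithTop.coe_lt_top i)) x).hasDerivAt
    have h := (firstOrderOp_step (c := c) hx (fun y hy => ha g hg y hy) hP).2
    change firstOrderOp (c : ℂ) (opList L g) x = _
    rw [h, List.length_cons]
    congr 1
    simp only [add_mul, Finset.sum_add_distrib]
    rw [Finset.sum_range_succ (fun i => (if i < L.length + 1 then _ else _) * _ * _),
      Finset.sum_range_succ' (fun i => (if i = 0 then _ else _) * _ * _)]
    simp only [lt_irrefl, if_false, if_true, zero_mul, add_zero, Nat.add_sub_cancel, Nat.succ_ne_zero]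
    rw [mul_add, Finset.mul_sum, Finset.mul_sum, Finset.mul_sum, ← add_assoc, ← Finset.sum_add_distrib]
    congr 1
    · refine Finset.sum_congr rfl fun i hi => ?_
      rw [if_pos (Finset.mem_range.1 hi)]
      rcases i with _ | i
      · simp; ring
      · simp only [Nat.add_sub_cancel]; ring
    · refine Finset.sum_congr rfl fun i hi => ?_
      ring

theorem opList_differentiableAt (L : List ℝ) {g : ℝ → ℂ} (hg : ContDiff ℝ (⊤ : ℕ∞) g) {x : ℝ}
    (hx : x ≠ 0) : DifferentiableAt ℝ (opList L g) x := by
  obtain ⟨a, ha⟩ := opList_repr L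
  have hP : DifferentiableAt ℝ (fun y : ℝ => ∑ i ∈ Finset.range (L.length + 1),
        a i * (y : ℂ) ^ i * iteratedDeriv i g y) x := by
    refine DifferentiableAt.fun_sum fun i _ => ?_
    refine DifferentiableAt.mul
      (((hasDerivAt_pow i (x : ℂ)).comp_ofReal).const_mul _).differentiableAt ?_
    exact (hg.differentiable_iteratedDeriv i (by exact_mod_cast WithTop.coe_lt_top i)) x
  exact (firstOrderOp_step (c := 0) hx (fun y hy => ha g hg y hy) hP.hasDerivAt).1

theorem opList_sub (L : List ℝ) {f g : ℝ → ℂ} (hf : ContDiff ℝ (⊤ : ℕ∞) f)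
    (hg : ContDiff ℝ (⊤ : ℕ∞) g) {x : ℝ} (hx : x ≠ 0) :
    opList L (fun y => f y - g y) x = opList L f x - opList L g x := by
  obtain ⟨a, ha⟩ := opList_repr L
  rw [ha _ (hf.sub hg) x hx, ha f hf x hx, ha g hg x hx, ← mul_sub, ← Finset.sum_sub_distrib]
  congr 1
  refine Finset.sum_congr rfl fun i _ => ?_
  rw [iteratedDeriv_fun_sub (hf.contDiffAt.of_le (by exact_mod_cast le_top))
    (hg.contDiffAt.of_le (by exact_mod_cast le_top))]
  ring

theorem opList_comp_neg (L : List ℝ) (g : ℝ → ℂ) (x : ℝ) :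
    opList L (fun y => g (-y)) x = (-1) ^ L.length * opList L g (-x) := by
  induction L generalizing x with
  | nil => simp [opList]
  | cons c L ih =>
    change firstOrderOp (c : ℂ) (opList L fun y => g (-y)) x =
      _ * firstOrderOp (c : ℂ) (opList L g) (-x)
    rw [funext ih]
    unfold firstOrderOp
    rw [deriv_const_mul_field, deriv_comp_neg, List.length_cons, pow_succ]
    push_cast
    rw [div_neg]
    ring

/-! ### Uniqueness: functions that are flat at the origin -/

/-- A smooth function whose derivatives of order `< j` vanish at `0` is `O(x ^ j)` there. -/
theorem flat_bound (j : ℕ) : ∀ g : ℝ → ℂ, ContDiff ℝ (⊤ : ℕ∞) g →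
    (∀ i < j, iteratedDeriv i g 0 = 0) →
    ∃ C : ℝ, 0 ≤ C ∧ ∀ x ∈ Set.Icc (0 : ℝ) 1, ‖g x‖ ≤ C * x ^ j := by
  induction j with
  | zero =>
    intro g hg _
    obtain ⟨C, hC⟩ := isCompact_Icc.exists_bound_of_continuousOn (s := Set.Icc (0 : ℝ) 1)
      hg.continuous.continuousOn
    exact ⟨C, (norm_nonneg _).trans (hC 0 (by simp)), fun x hx => by simpa using hC x hx⟩
  | succ j ih =>
    intro g hg h0
    have hd : ContDiff ℝ (⊤ : ℕ∞) (deriv g) := by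
      have := contDiff_infty_iff_deriv.1 hg
      exact this.2
    obtain ⟨C, hC0, hC⟩ := ih (deriv g) hd fun i hi => by
      rw [← iteratedDeriv_succ']; exact h0 _ (by omega)
    refine ⟨C, hC0, fun x hx => ?_⟩
    have h := norm_image_sub_le_of_norm_deriv_le_segment' (f := g) (f' := deriv g)
      (C := C * x ^ j) (a := 0) (b := x)
      (fun y _ => ((hg.differentiable (by simp)) y).hasDerivAt.hasDerivWithinAt)
      (fun y hy => (hC y ⟨hy.1, hy.2.le.trans hx.2⟩).trans
        (mul_le_mul_of_nonneg_left (pow_le_pow_left₀ hy.1 hy.2.le j) hC0)) x ⟨hx.1, le_rfl⟩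
    have hg0 : g 0 = 0 := by simpa using h0 0 (by omega)
    rw [hg0, sub_zero, sub_zero] at h
    rw [pow_succ, ← mul_assoc]; exact h

/-- Applying fewer than `m` first-order factors to a function that is flat of order `m` gives a
function that vanishes at the origin, since each term `x ^ (i - r) * g⁽ⁱ⁾ x` with `r < m` is
`O(x ^ (m - r))`. -/
theorem opList_tendsto_zero {m : ℕ} (L : List ℝ) (hL : L.length < m) {g : ℝ → ℂ}
    (hg : ContDiff ℝ (⊤ : ℕ∞) g) (h0 : ∀ i < m, iteratedDeriv i g 0 = 0) :
    Tendsto (opList L g) (𝓝[>] 0) (𝓝 0) := by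
  obtain ⟨a, ha⟩ := opList_repr L
  have hev : (fun x : ℝ => ∑ i ∈ Finset.range (L.length + 1),
      ((x : ℂ) ^ L.length)⁻¹ * (a i * (x : ℂ) ^ i * iteratedDeriv i g x)) =ᶠ[𝓝[>] 0] opList L g := by
    filter_upwards [self_mem_nhdsWithin] with x hx
    rw [ha g hg x (ne_of_gt hx), Finset.mul_sum]
  refine Tendsto.congr' hev ?_
  rw [show (0 : ℂ) = ∑ i ∈ Finset.range (L.length + 1), (0 : ℂ) by simp]
  refine tendsto_finsetSum _ fun i hi => ?_
  have hi' : i ≤ L.length := by simpa [Nat.lt_succ_iff] using hi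
  have hsm : ContDiff ℝ (⊤ : ℕ∞) (iteratedDeriv i g) := by
    rw [iteratedDeriv_eq_iterate]; exact hg.iterate_deriv i
  obtain ⟨C, hC0, hC⟩ := flat_bound (m - i) (iteratedDeriv i g) hsm fun l hl => by
    rw [iteratedDeriv_eq_iterate, iteratedDeriv_eq_iterate, ← Function.iterate_add_apply,
      ← iteratedDeriv_eq_iterate]
    exact h0 _ (by omega)
  have hlim : Tendsto (fun x : ℝ => ‖a i‖ * C * x) (𝓝[>] 0) (𝓝 0) := by
    have : Tendsto (fun x : ℝ => ‖a i‖ * C * x) (𝓝 0) (𝓝 (‖a i‖ * C * 0)) :=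
      (continuous_const.mul continuous_id).tendsto 0
    rw [mul_zero] at this
    exact this.mono_left nhdsWithin_le_nhds
  refine squeeze_zero_norm' ?_ hlim
  filter_upwards [Ioo_mem_nhdsGT (zero_lt_one (α := ℝ))] with x hx
  have hxp : 0 < x := hx.1
  rw [norm_mul, norm_inv, norm_mul, norm_mul, norm_pow, norm_pow, Complex.norm_real,
    Real.norm_of_nonneg hxp.le, inv_mul_le_iff₀ (by positivity)]
  calc ‖a i‖ * x ^ i * ‖iteratedDeriv i g x‖ ≤ ‖a i‖ * x ^ i * (C * x ^ (m - i)) := by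
        gcongr; exact hC x ⟨hxp.le, hx.2.le⟩
    _ = ‖a i‖ * C * x ^ m := by
        rw [show x ^ m = x ^ i * x ^ (m - i) by rw [← pow_add]; congr 1; omega]; ring
    _ ≤ ‖a i‖ * C * x ^ (L.length + 1) := by
        gcongr ?_ * ?_
        exact pow_le_pow_of_le_one hxp.le hx.2.le hL
    _ = _ := by ring

/-- Inversion of a first-order factor with `c ≥ 0`: since
`(x ^ c * u)' = x ^ c * (u' + (c/x) * u)` and `u → 0` at the origin, `‖u x‖` is at most the integral
of `‖u' + (c/x) * u‖` over `(0, x)`. -/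
theorem firstOrderOp_integrate {u : ℝ → ℂ} {c A R : ℝ} {p : ℕ} (hc : 0 ≤ c) (hA : 0 ≤ A)
    (hu : ∀ x, 0 < x → DifferentiableAt ℝ u x) (h0 : Tendsto u (𝓝[>] 0) (𝓝 0))
    (hb : ∀ x, 0 < x → x ≤ R → ‖firstOrderOp (c : ℂ) u x‖ ≤ A * (x ^ p / p.factorial)) :
    ∀ x, 0 < x → x ≤ R → ‖u x‖ ≤ A * (x ^ (p + 1) / (p + 1).factorial) := by
  intro x hx hxR
  -- On `[ε, x]` the weight `t ^ c` is at most `x ^ c`, which cancels after integration.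
  have key : ∀ ε, 0 < ε → ε < x → ‖u x‖ ≤ ‖u ε‖ + A * (x ^ (p + 1) / (p + 1).factorial) := by
    intro ε hε hεx
    have hder : ∀ t : ℝ, 0 < t → HasDerivAt (fun t : ℝ => ((t ^ c : ℝ) : ℂ) * u t)
        (((t ^ c : ℝ) : ℂ) * firstOrderOp (c : ℂ) u t) t := by
      intro t ht
      have h1 : HasDerivAt (fun t : ℝ => ((t ^ c : ℝ) : ℂ)) ((c * t ^ (c - 1) : ℝ) : ℂ) t :=
        (Real.hasDerivAt_rpow_const (Or.inl ht.ne')).ofReal_comp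
      refine (h1.mul (hu t ht).hasDerivAt).congr_deriv ?_
      have htc : (t : ℂ) ≠ 0 := by exact_mod_cast ht.ne'
      rw [Real.rpow_sub_one ht.ne']
      unfold firstOrderOp
      push_cast
      field_simp
      ring
    have hB : ∀ t : ℝ, HasDerivAt (fun t : ℝ => ε ^ c * ‖u ε‖ +
        x ^ c * (A * ((t ^ (p + 1) - ε ^ (p + 1)) / (p + 1).factorial)))
        (x ^ c * (A * (t ^ p / p.factorial))) t := by
      intro t
      have h2 := ((((((hasDerivAt_pow (p + 1) t).sub_const (ε ^ (p + 1))).div_const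
        ((p + 1).factorial : ℝ)).const_mul A).const_mul (x ^ c))).const_add (ε ^ c * ‖u ε‖)
      refine h2.congr_deriv ?_
      rw [Nat.factorial_succ]
      push_cast
      field_simp
    have hmain := image_norm_le_of_norm_deriv_right_le_deriv_boundary
      (f := fun t : ℝ => ((t ^ c : ℝ) : ℂ) * u t) (a := ε) (b := x)
      (fun t ht => (hder t (hε.trans_le ht.1)).continuousAt.continuousWithinAt)
      (fun t ht => (hder t (hε.trans_le ht.1)).hasDerivWithinAt)
      (by simp [abs_of_nonneg (Real.rpow_nonneg hε.le c)]) hB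
      (fun t ht => by
        have ht0 : 0 < t := hε.trans_le ht.1
        rw [norm_mul, Complex.norm_real, Real.norm_of_nonneg (Real.rpow_nonneg ht0.le c)]
        exact mul_le_mul (Real.rpow_le_rpow ht0.le ht.2.le hc) (hb t ht0 (ht.2.le.trans hxR))
          (norm_nonneg _) (Real.rpow_nonneg hx.le c))
      ⟨hεx.le, le_rfl⟩
    have hxc : 0 < x ^ c := Real.rpow_pos_of_pos hx c
    rw [norm_mul, Complex.norm_real, Real.norm_of_nonneg hxc.le] at hmain
    refine le_of_mul_le_mul_left (hmain.trans ?_) hxc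
    rw [mul_add]
    gcongr
    have : 0 < ε ^ (p + 1) := by positivity
    linarith
  have hlim : Tendsto (fun ε => ‖u ε‖ + A * (x ^ (p + 1) / (p + 1).factorial)) (𝓝[>] 0)
      (𝓝 (0 + A * (x ^ (p + 1) / (p + 1).factorial))) := by
    have := h0.norm
    rw [norm_zero] at this
    exact this.add_const _
  rw [zero_add] at hlim
  refine ge_of_tendsto hlim ?_
  filter_upwards [Ioo_mem_nhdsGT hx] with ε hε using key ε hε.1 hε.2

theorem opList_integrate {m : ℕ} {g : ℝ → ℂ} {A R : ℝ} (hA : 0 ≤ A)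
    (hg : ContDiff ℝ (⊤ : ℕ∞) g) (h0 : ∀ i < m, iteratedDeriv i g 0 = 0) (L : List ℝ) :
    ∀ p : ℕ, L.length ≤ m → (∀ c ∈ L, 0 ≤ c) →
    (∀ x, 0 < x → x ≤ R → ‖opList L g x‖ ≤ A * (x ^ p / p.factorial)) →
    ∀ x, 0 < x → x ≤ R → ‖g x‖ ≤ A * (x ^ (p + L.length) / (p + L.length).factorial) := by
  induction L with
  | nil => intro p _ _ h; simpa [opList] using h
  | cons c L ih =>
    intro p hL hc hb
    have h := firstOrderOp_integrate (hc c (by simp)) hA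
      (fun x hx => opList_differentiableAt L hg hx.ne')
      (opList_tendsto_zero L hL hg h0) hb
    have := ih (p + 1) (Nat.le_of_succ_le hL) (fun d hd => hc d (by simp [hd])) h
    rw [List.length_cons, ← add_assoc, add_right_comm]
    exact this

/-- Iterating `opList_integrate` on `opList L g = μ * g` gives
`‖g‖ ≤ M * ‖μ‖ ^ n * x ^ (n m) / (n m)!` for every `n`, where `m` is the length of `L`. -/
theorem eq_zero_of_pos {g : ℝ → ℂ} (L : List ℝ) (hL : 0 < L.length) (hc : ∀ c ∈ L, 0 ≤ c)
    (hg : ContDiff ℝ (⊤ : ℕ∞) g) (h0 : ∀ i < L.length, iteratedDeriv i g 0 = 0) (μ : ℂ)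
    (hode : ∀ x, 0 < x → opList L g x = μ * g x) (x : ℝ) (hx : 0 < x) : g x = 0 := by
  obtain ⟨M, hM⟩ := isCompact_Icc.exists_bound_of_continuousOn (s := Set.Icc (0 : ℝ) x)
      hg.continuous.continuousOn
  have hM0 : 0 ≤ M := (norm_nonneg _).trans (hM x ⟨hx.le, le_rfl⟩)
  have key : ∀ n : ℕ, ∀ y, 0 < y → y ≤ x →
      ‖g y‖ ≤ (M * ‖μ‖ ^ n) * (y ^ (n * L.length) / (n * L.length).factorial) := by
    intro n
    induction n with
    | zero => intro y hy hyx; simpa using hM y ⟨hy.le, hyx⟩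
    | succ n ih =>
      rw [Nat.succ_mul]
      refine opList_integrate (by positivity) hg h0 L (n * L.length) le_rfl hc fun y hy hyx => ?_
      rw [hode y hy, norm_mul, pow_succ]
      calc ‖μ‖ * ‖g y‖ ≤ ‖μ‖ * ((M * ‖μ‖ ^ n) * (y ^ (n * L.length) / (n * L.length).factorial)) := by
            gcongr; exact ih y hy hyx
        _ = _ := by ring
  -- `‖μ‖ ^ n ≤ (max 1 ‖μ‖) ^ (n * m)` bounds everything by `M * z ^ N / N!` with `N = n * m`.
  have hlim : Tendsto (fun n : ℕ => M * ((max 1 ‖μ‖ * x) ^ (n * L.length) /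
      (n * L.length).factorial)) atTop (𝓝 (M * 0)) :=
    ((FloorSemiring.tendsto_pow_div_factorial_atTop _).comp
      (tendsto_id.atTop_mul_const' hL)).const_mul M
  rw [mul_zero] at hlim
  refine norm_le_zero_iff.1 (ge_of_tendsto' hlim fun n => (key n x hx le_rfl).trans ?_)
  rw [mul_pow, mul_assoc, ← mul_div_assoc]
  gcongr
  calc ‖μ‖ ^ n ≤ max 1 ‖μ‖ ^ n := by gcongr; exact le_max_right _ _
    _ ≤ max 1 ‖μ‖ ^ (n * L.length) :=
      pow_le_pow_right₀ (le_max_left _ _) (Nat.le_mul_of_pos_right n hL)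

theorem eq_zero_of_flat {g : ℝ → ℂ} (L : List ℝ) (hL : 0 < L.length) (hc : ∀ c ∈ L, 0 ≤ c)
    (hg : ContDiff ℝ (⊤ : ℕ∞) g) (h0 : ∀ i < L.length, iteratedDeriv i g 0 = 0) (μ : ℂ)
    (hode : ∀ x, x ≠ 0 → opList L g x = μ * g x) (x : ℝ) : g x = 0 := by
  rcases lt_trichotomy x 0 with hx | rfl | hx
  · have := eq_zero_of_pos (g := fun y => g (-y)) L hL hc (hg.comp contDiff_neg)
      (fun i hi => by rw [iteratedDeriv_comp_neg, neg_zero, h0 i hi, smul_zero])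
      ((-1) ^ L.length * μ)
      (fun y hy => by rw [opList_comp_neg, hode _ (neg_ne_zero.2 hy.ne'), mul_assoc]) (-x)
      (neg_pos.2 hx)
    simpa using this
  · simpa using h0 0 hL
  · exact eq_zero_of_pos L hL hc hg h0 μ (fun y hy => hode y hy.ne') x hx

/-! ### Existence: entire power series -/

/-- Coefficient sequences of entire power series. -/
def EntireCoeff (b : ℕ → ℂ) : Prop := ∀ R : ℝ, 0 ≤ R → Summable fun n => ‖b n‖ * R ^ n

/-- The sum of the power series with coefficients `b`. -/
noncomputable def powerSum (b : ℕ → ℂ) (w : ℂ) : ℂ := ∑' n, b n * w ^ n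

theorem EntireCoeff.summable {b : ℕ → ℂ} (hb : EntireCoeff b) (w : ℂ) :
    Summable fun n => b n * w ^ n :=
  Summable.of_norm <| by simpa using hb ‖w‖ (norm_nonneg w)

/-- Entire power series are stable under the Euler operator `α + β * w * d/dw`. -/
theorem EntireCoeff.linear_mul {b : ℕ → ℂ} (hb : EntireCoeff b) (α β : ℂ) :
    EntireCoeff fun n => (α + β * n) * b n := by
  intro R hR
  refine Summable.of_nonneg_of_le (fun n => by positivity) (fun n => ?_)
    ((hb (2 * R) (by positivity)).mul_left (‖α‖ + ‖β‖))
  have h1 : (n : ℝ) ≤ 2 ^ n := by exact_mod_cast Nat.lt_two_pow_self.le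
  have h2 : (1 : ℝ) ≤ 2 ^ n := one_le_pow₀ (by norm_num)
  have h3 : ‖α + β * n‖ ≤ (‖α‖ + ‖β‖) * 2 ^ n := by
    calc ‖α + β * n‖ ≤ ‖α‖ + ‖β * n‖ := norm_add_le _ _
      _ = ‖α‖ * 1 + ‖β‖ * n := by simp
      _ ≤ ‖α‖ * 2 ^ n + ‖β‖ * 2 ^ n := by gcongr
      _ = _ := by ring
  rw [norm_mul]
  calc ‖α + β * n‖ * ‖b n‖ * R ^ n ≤ (‖α‖ + ‖β‖) * 2 ^ n * ‖b n‖ * R ^ n := by gcongr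
    _ = _ := by rw [mul_pow]; ring

theorem EntireCoeff.shift {b : ℕ → ℂ} (hb : EntireCoeff b) : EntireCoeff fun n => b (n + 1) := by
  intro R hR
  refine Summable.of_nonneg_of_le (fun n => by positivity) (fun n => ?_)
    ((summable_nat_add_iff 1).2 (hb (max 1 R) (by positivity)))
  gcongr
  calc R ^ n ≤ max 1 R ^ n := by gcongr; exact le_max_right _ _
    _ ≤ max 1 R ^ (n + 1) := pow_le_pow_right₀ (le_max_left _ _) n.le_succ

theorem powerSum_hasDerivAt {b : ℕ → ℂ} (hb : EntireCoeff b) (w : ℂ) :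
    HasDerivAt (powerSum b) (∑' n, b n * (n * w ^ (n - 1))) w := by
  set R : ℝ := ‖w‖ + 1 with hR
  have hR1 : 1 ≤ R := by simp [hR]
  have hs := (hb.linear_mul 0 1) R (by positivity)
  refine hasDerivAt_tsum_of_isPreconnected (t := Metric.ball 0 R) (y₀ := w) hs Metric.isOpen_ball
    (convex_ball _ _).isPreconnected (fun n y _ => (hasDerivAt_pow n y).const_mul (b n))
    (fun n y hy => ?_) (by simp [hR]) (hb.summable w) (by simp [hR])
  have hy' : ‖y‖ ≤ R := by simpa using (mem_ball_zero_iff.1 hy).le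
  simp only [norm_mul, norm_pow, Complex.norm_natCast, zero_add, one_mul]
  calc ‖b n‖ * (n * ‖y‖ ^ (n - 1)) ≤ ‖b n‖ * (n * R ^ (n - 1)) := by gcongr
    _ ≤ ‖b n‖ * (n * R ^ n) := by
      gcongr
      omega
    _ = _ := by ring

theorem mul_deriv_powerSum {b : ℕ → ℂ} (hb : EntireCoeff b) (w : ℂ) :
    w * deriv (powerSum b) w = powerSum (fun n => n * b n) w := by
  rw [(powerSum_hasDerivAt hb w).deriv, powerSum, ← tsum_mul_left]
  refine tsum_congr fun n => ?_
  rcases n with _ | n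
  · simp
  · simp only [Nat.add_sub_cancel]; ring

theorem powerSum_eq_add {b : ℕ → ℂ} (hb : EntireCoeff b) (w : ℂ) :
    powerSum b w = b 0 + w * powerSum (fun n => b (n + 1)) w := by
  rw [powerSum, (hb.summable w).tsum_eq_zero_add, powerSum, ← tsum_mul_left]
  simp only [pow_zero, mul_one]
  congr 1
  exact tsum_congr fun n => by ring

theorem powerSum_linear {b : ℕ → ℂ} (hb : EntireCoeff b) (α β w : ℂ) :
    powerSum (fun n => (α + β * n) * b n) w =
      α * powerSum b w + β * powerSum (fun n => n * b n) w := by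
  have h2 : EntireCoeff fun n => n * b n := by simpa using hb.linear_mul 0 1
  simp only [powerSum]
  rw [← tsum_mul_left, ← tsum_mul_left,
    ← ((hb.summable w).mul_left α).tsum_add ((h2.summable w).mul_left β)]
  exact tsum_congr fun n => by ring

theorem powerSum_contDiff {b : ℕ → ℂ} (hb : EntireCoeff b) (m : ℕ) (lam : ℂ) :
    ContDiff ℝ (⊤ : ℕ∞) fun x : ℝ => powerSum b ((lam * x) ^ m) := by
  have h : Differentiable ℂ (powerSum b) := fun w => (powerSum_hasDerivAt hb w).differentiableAt
  have h' : ContDiff ℝ (⊤ : ℕ∞) (powerSum b) := h.contDiff.restrict_scalars ℝ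
  exact h'.comp ((contDiff_const.mul Complex.ofRealCLM.contDiff).pow m)

/-- The factor by which the composition of the operators `d/dx + c/x`, `c ∈ L`, multiplies the
monomial `x ^ q` (besides lowering the exponent by the length of `L`). -/
noncomputable def symbol (L : List ℝ) (q : ℂ) : ℂ :=
  match L with
  | [] => 1
  | c :: L => (c - L.length + q) * symbol L q

/-- Term-by-term application of `opList L` to a power series in `(λ x) ^ m`: the monomial
`x ^ (m n)` is multiplied by `symbol L (m n)`. -/
theorem opList_powerSum (L : List ℝ) {b : ℕ → ℂ} (hb : EntireCoeff b) (m : ℕ) (lam : ℂ) :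
    EntireCoeff (fun n => symbol L (m * n) * b n) ∧
    ∀ x : ℝ, x ≠ 0 → opList L (fun x : ℝ => powerSum b ((lam * x) ^ m)) x =
      ((x : ℂ) ^ L.length)⁻¹ * powerSum (fun n => symbol L (m * n) * b n) ((lam * x) ^ m) := by
  induction L with
  | nil => exact ⟨by simpa [symbol] using hb, fun x _ => by simp [symbol, opList]⟩
  | cons c L ih =>
    obtain ⟨hE, ih⟩ := ih
    have heq : (fun n : ℕ => symbol (c :: L) (m * n) * b n) =
        fun n : ℕ => ((c - L.length : ℂ) + m * n) * (symbol L (m * n) * b n) := by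
      funext n; simp only [symbol]; ring
    rw [heq]
    refine ⟨hE.linear_mul _ _, fun x hx => ?_⟩
    have hin : HasDerivAt (fun y : ℝ => (lam * (y : ℂ)) ^ m)
        (m * (lam * (x : ℂ)) ^ (m - 1) * lam) x := by
      have := (((hasDerivAt_id (x : ℂ)).const_mul lam).pow m).comp_ofReal
      simpa using this
    have hP := ((powerSum_hasDerivAt hE ((lam * (x : ℂ)) ^ m)).differentiableAt.hasDerivAt).comp x hin
    have h := (firstOrderOp_step (c := c) hx ih hP).2
    change firstOrderOp (c : ℂ) (opList L _) x = _
    rw [h, powerSum_linear hE, ← mul_deriv_powerSum hE, List.length_cons]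
    congr 2
    rcases m with _ | m
    · simp
    · simp only [Nat.add_sub_cancel]; ring

theorem symbol_map_range (n : ℕ) (c : ℕ → ℝ) (q : ℂ) :
    symbol ((List.range n).map c) q =
      ∏ j ∈ Finset.range n, ((c j : ℂ) - ((n : ℂ) - 1 - j) + q) := by
  induction n generalizing c with
  | zero => simp [symbol]
  | succ n ih =>
    rw [List.range_succ_eq_map, List.map_cons, List.map_map, symbol, ih, Finset.prod_range_succ',
      mul_comm]
    simp only [List.length_map, List.length_range, Function.comp, Nat.succ_eq_add_one]
    push_cast
    congr 1
    · exact Finset.prod_congr rfl fun j _ => by ring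
    · ring

/-! ### The hyper-Bessel operator and the coefficients of the hyper-Bessel function -/

/-- The constants of the first-order factors of `B_m`, outermost first; the final entry `0`
is the innermost factor `d/dx`. -/
noncomputable def besselList (m : ℕ) (ν : ℕ → ℝ) : List ℝ :=
  (List.range m).map fun j => if j + 1 < m then m * ν (j + 1) + m - (j + 1) else 0

theorem hyperBesselOp_eq (m : ℕ) (hm : 2 ≤ m) (ν : ℕ → ℝ) (g : ℝ → ℂ) :
    hyperBesselOp m ν g = opList (besselList m ν) g := by
  obtain ⟨k, rfl⟩ : ∃ k, m = k + 1 := ⟨m - 1, by omega⟩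
  have h0 : firstOrderOp ((0 : ℝ) : ℂ) g = deriv g := by
    funext x; simp [firstOrderOp]
  have hcomp : ∀ (l : List ℕ) (c d : ℕ → ℝ) (u : ℝ → ℂ), (∀ j ∈ l, c j = d j) →
      ((l.map fun j => firstOrderOp (c j : ℂ)).foldr (· ∘ ·) id) u = opList (l.map d) u := by
    intro l c d u h
    induction l with
    | nil => rfl
    | cons j l ih =>
      have := ih fun i hi => h i (by simp [hi])
      simp only [List.map_cons, List.foldr_cons, Function.comp_apply, this, opList,
        h j (by simp)]
  unfold hyperBesselOp besselList
  rw [List.range_succ, List.map_append, opList, List.foldr_append, Nat.add_sub_cancel]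
  simp only [List.map_cons, List.map_nil, List.foldr_cons, List.foldr_nil, lt_irrefl, if_false, h0]
  refine hcomp _ _ _ _ fun j hj => ?_
  rw [if_pos (by simpa using hj)]

theorem symbol_besselList (m : ℕ) (hm : 2 ≤ m) (ν : ℕ → ℝ) (q : ℂ) :
    symbol (besselList m ν) q = q * ∏ k ∈ Finset.Icc 1 (m - 1), (q + m * ν k) := by
  obtain ⟨k, rfl⟩ : ∃ k, m = k + 1 := ⟨m - 1, by omega⟩
  rw [besselList, symbol_map_range, Finset.prod_range_succ, mul_comm, Nat.add_sub_cancel,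
    ← Finset.Ico_add_one_right_eq_Icc, Finset.prod_Ico_eq_prod_range]
  congr 1
  · simp
  · refine Finset.prod_congr (by simp) fun j hj => ?_
    have hj' : j < k := by simpa using hj
    rw [if_pos (by omega), add_comm 1 j]
    push_cast
    ring

/-- The coefficients of `𝒥_{ν,m}(z)` as a power series in `z ^ m`. -/
noncomputable def besselCoeff (m : ℕ) (ν : ℕ → ℝ) (n : ℕ) : ℂ :=
  (-1) ^ n * (∏ k ∈ Finset.Icc 1 (m - 1),
      ((Real.Gamma (ν k + 1) / Real.Gamma (ν k + n + 1) : ℝ) : ℂ)) *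
    ((m : ℂ) ^ (n * m))⁻¹ / (Nat.factorial n : ℂ)

theorem hyperBessel_eq_powerSum (m : ℕ) (ν : ℕ → ℝ) (z : ℂ) :
    hyperBessel m ν z = powerSum (besselCoeff m ν) (z ^ m) := by
  unfold hyperBessel powerSum besselCoeff
  refine tsum_congr fun n => ?_
  rw [div_pow, ← pow_mul, mul_comm m n]
  ring

theorem one_le_mul_nu {m : ℕ} {ν : ℕ → ℝ} (hm : 2 ≤ m)
    (hν : ∀ k, 1 ≤ k → k ≤ m - 1 → ν k ≥ -1 + (k : ℝ) / m)
    {k : ℕ} (hk : k ∈ Finset.Icc 1 (m - 1)) : 1 ≤ (m : ℝ) * (ν k + 1) := by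
  obtain ⟨h1, h2⟩ := Finset.mem_Icc.1 hk
  have hm0 : (0 : ℝ) < m := by positivity
  have := hν k h1 h2
  have h3 : (k : ℝ) / m ≤ ν k + 1 := by linarith
  rw [div_le_iff₀' hm0] at h3
  exact le_trans (by exact_mod_cast h1) h3

/-- The recurrence for the coefficients of `𝒥_{ν,m}`; this is the differential equation at the
level of power series. -/
theorem besselCoeff_succ {m : ℕ} {ν : ℕ → ℝ} (hm : 2 ≤ m)
    (hν : ∀ k, 1 ≤ k → k ≤ m - 1 → ν k ≥ -1 + (k : ℝ) / m)
    (n : ℕ) :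
    symbol (besselList m ν) (m * ((n + 1 : ℕ) : ℂ)) * besselCoeff m ν (n + 1) =
      -besselCoeff m ν n := by
  have hm0 : (m : ℂ) ≠ 0 := by
    have : m ≠ 0 := by omega
    exact_mod_cast this
  have hprod : (∏ k ∈ Finset.Icc 1 (m - 1), ((m : ℂ) * ((n + 1 : ℕ) : ℂ) + m * ν k)) *
      ∏ k ∈ Finset.Icc 1 (m - 1),
        ((Real.Gamma (ν k + 1) / Real.Gamma (ν k + ((n + 1 : ℕ) : ℝ) + 1) : ℝ) : ℂ) =
      (m : ℂ) ^ (m - 1) * ∏ k ∈ Finset.Icc 1 (m - 1),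
        ((Real.Gamma (ν k + 1) / Real.Gamma (ν k + n + 1) : ℝ) : ℂ) := by
    have hc : (m : ℂ) ^ (m - 1) = ∏ k ∈ Finset.Icc 1 (m - 1), (m : ℂ) := by simp
    rw [hc, ← Finset.prod_mul_distrib, ← Finset.prod_mul_distrib]
    refine Finset.prod_congr rfl fun k hk => ?_
    have hpos : 0 < ν k + 1 := by
      have := one_le_mul_nu hm hν hk
      exact pos_of_mul_pos_right (by linarith : 0 < (m : ℝ) * (ν k + 1)) (by positivity)
    have hpos' : 0 < ν k + n + 1 := by
      have : (0 : ℝ) ≤ n := by positivity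
      linarith
    have hG : Real.Gamma (ν k + ((n + 1 : ℕ) : ℝ) + 1) =
        (ν k + n + 1) * Real.Gamma (ν k + n + 1) := by
      rw [← Real.Gamma_add_one hpos'.ne']; push_cast; ring_nf
    have hG0 := (Real.Gamma_pos_of_pos hpos').ne'
    have hreal : ((m : ℝ) * ((n + 1 : ℕ) : ℝ) + m * ν k) *
        (Real.Gamma (ν k + 1) / Real.Gamma (ν k + ((n + 1 : ℕ) : ℝ) + 1)) =
        m * (Real.Gamma (ν k + 1) / Real.Gamma (ν k + n + 1)) := by
      rw [hG]
      push_cast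
      field_simp
      ring
    exact_mod_cast hreal
  rw [symbol_besselList m hm, besselCoeff, besselCoeff]
  have hfac : ((n + 1).factorial : ℂ) = (n + 1) * n.factorial := by
    rw [Nat.factorial_succ]; push_cast; ring
  have hn1 : (n + 1 : ℂ) ≠ 0 := by exact_mod_cast n.succ_ne_zero
  have hnf : (n.factorial : ℂ) ≠ 0 := by exact_mod_cast n.factorial_ne_zero
  have hmm : (m : ℂ) ^ m = m * (m : ℂ) ^ (m - 1) := by
    rw [← pow_succ']; congr 1; omega
  calc _ = (m * ((n + 1 : ℕ) : ℂ)) * ((∏ k ∈ Finset.Icc 1 (m - 1),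
        ((m : ℂ) * ((n + 1 : ℕ) : ℂ) + m * ν k)) * ∏ k ∈ Finset.Icc 1 (m - 1),
        ((Real.Gamma (ν k + 1) / Real.Gamma (ν k + ((n + 1 : ℕ) : ℝ) + 1) : ℝ) : ℂ)) *
        ((-1) ^ (n + 1) * ((m : ℂ) ^ ((n + 1) * m))⁻¹ / ((n + 1).factorial : ℂ)) := by ring
    _ = _ := by
      rw [hprod, hfac, Nat.succ_mul, pow_add (m : ℂ), hmm, pow_succ]
      push_cast
      have hm1 : (m : ℂ) ^ (m - 1) ≠ 0 := pow_ne_zero _ hm0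
      have hm2 : (m : ℂ) ^ (n * m) ≠ 0 := pow_ne_zero _ hm0
      field_simp

/-- The lower bound on the factor in the recurrence `besselCoeff_succ` that makes the
coefficients decay at least like `1 / n!`; it uses `m (ν_k + 1) ≥ k ≥ 1`. -/
theorem succ_le_norm_symbol {m : ℕ} {ν : ℕ → ℝ} (hm : 2 ≤ m)
    (hν : ∀ k, 1 ≤ k → k ≤ m - 1 → ν k ≥ -1 + (k : ℝ) / m)
    (n : ℕ) :
    (n + 1 : ℝ) ≤ ‖symbol (besselList m ν) (m * ((n + 1 : ℕ) : ℂ))‖ := by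
  rw [symbol_besselList m hm, norm_mul, norm_prod, norm_mul, Complex.norm_natCast,
    Complex.norm_natCast]
  have h1 : (1 : ℝ) ≤ ∏ k ∈ Finset.Icc 1 (m - 1), ‖(m : ℂ) * ((n + 1 : ℕ) : ℂ) + m * ν k‖ := by
    rw [← Finset.prod_const_one (s := Finset.Icc 1 (m - 1))]
    refine Finset.prod_le_prod (fun _ _ => zero_le_one) fun k hk => ?_
    have h := one_le_mul_nu hm hν hk
    have heq : (m : ℂ) * ((n + 1 : ℕ) : ℂ) + m * ν k =
        ((m * n + m * (ν k + 1) : ℝ) : ℂ) := by push_cast; ring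
    rw [heq, Complex.norm_real]
    refine le_trans ?_ (le_abs_self _)
    have : (0 : ℝ) ≤ m * n := by positivity
    linarith
  have h2 : (1 : ℝ) ≤ m := by exact_mod_cast (by omega : 1 ≤ m)
  have h3 : (n + 1 : ℝ) ≤ m * ((n + 1 : ℕ) : ℝ) := by
    push_cast
    exact le_mul_of_one_le_left (by positivity) h2
  exact h3.trans (le_mul_of_one_le_right (by positivity) h1)

theorem besselCoeff_zero {m : ℕ} {ν : ℕ → ℝ} (hm : 2 ≤ m)
    (hν : ∀ k, 1 ≤ k → k ≤ m - 1 → ν k ≥ -1 + (k : ℝ) / m) : besselCoeff m ν 0 = 1 := by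
  have : ∀ k ∈ Finset.Icc 1 (m - 1),
      ((Real.Gamma (ν k + 1) / Real.Gamma (ν k + (0 : ℕ) + 1) : ℝ) : ℂ) = 1 := by
    intro k hk
    have hpos : 0 < ν k + 1 := by
      have := one_le_mul_nu hm hν hk
      exact pos_of_mul_pos_right (by linarith : 0 < (m : ℝ) * (ν k + 1)) (by positivity)
    rw [Nat.cast_zero, add_zero, div_self (Real.Gamma_pos_of_pos hpos).ne', Complex.ofReal_one]
  rw [besselCoeff, Finset.prod_congr rfl this]
  simp

theorem besselCoeff_norm_le {m : ℕ} {ν : ℕ → ℝ} (hm : 2 ≤ m)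
    (hν : ∀ k, 1 ≤ k → k ≤ m - 1 → ν k ≥ -1 + (k : ℝ) / m)
    (n : ℕ) : ‖besselCoeff m ν n‖ ≤ 1 / n.factorial := by
  induction n with
  | zero => simp [besselCoeff_zero hm hν]
  | succ n ih =>
    have h := congrArg norm (besselCoeff_succ hm hν n)
    rw [norm_mul, norm_neg] at h
    have h2 := succ_le_norm_symbol hm hν n
    have h3 : (n + 1 : ℝ) * ‖besselCoeff m ν (n + 1)‖ ≤ 1 / n.factorial :=
      (mul_le_mul_of_nonneg_right h2 (norm_nonneg _)).trans (h.le.trans ih)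
    rw [Nat.factorial_succ]
    push_cast
    rw [← div_div, div_right_comm, le_div_iff₀' (by positivity)]
    exact h3

theorem besselCoeff_entire {m : ℕ} {ν : ℕ → ℝ} (hm : 2 ≤ m)
    (hν : ∀ k, 1 ≤ k → k ≤ m - 1 → ν k ≥ -1 + (k : ℝ) / m) : EntireCoeff (besselCoeff m ν) := by
  intro R hR
  refine Summable.of_nonneg_of_le (fun n => by positivity) (fun n => ?_)
    (Real.summable_pow_div_factorial R)
  calc ‖besselCoeff m ν n‖ * R ^ n ≤ 1 / n.factorial * R ^ n := by
        gcongr; exact besselCoeff_norm_le hm hν n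
    _ = _ := by ring

/-- The hypothesis `ν_k ≥ -1 + k/m` says exactly that all constants `m ν_k + m - k` are
nonnegative. -/
theorem besselList_nonneg {m : ℕ} {ν : ℕ → ℝ} (hm : 2 ≤ m)
    (hν : ∀ k, 1 ≤ k → k ≤ m - 1 → ν k ≥ -1 + (k : ℝ) / m) : ∀ c ∈ besselList m ν, 0 ≤ c := by
  intro c hc
  obtain ⟨j, hj, rfl⟩ := List.mem_map.1 hc
  split_ifs with h
  · have hm0 : (0 : ℝ) < m := by positivity
    have := hν (j + 1) (by omega) (by omega)
    have h2 := mul_le_mul_of_nonneg_left this.le hm0.le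
    have h3 : (m : ℝ) * (-1 + ((j + 1 : ℕ) : ℝ) / m) = -m + (j + 1) := by
      push_cast; field_simp
    linarith
  · exact le_rfl

theorem hyperBessel_contDiff {m : ℕ} {ν : ℕ → ℝ} (hm : 2 ≤ m)
    (hν : ∀ k, 1 ≤ k → k ≤ m - 1 → ν k ≥ -1 + (k : ℝ) / m)
    (lam : ℂ) :
    ContDiff ℝ (⊤ : ℕ∞) fun x : ℝ => hyperBessel m ν (lam * x) := by
  simp only [hyperBessel_eq_powerSum]
  exact powerSum_contDiff (besselCoeff_entire hm hν) m lam

theorem hyperBessel_ode {m : ℕ} {ν : ℕ → ℝ} (hm : 2 ≤ m)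
    (hν : ∀ k, 1 ≤ k → k ≤ m - 1 → ν k ≥ -1 + (k : ℝ) / m)
    (lam : ℂ) (x : ℝ) (hx : x ≠ 0) :
    hyperBesselOp m ν (fun x : ℝ => hyperBessel m ν (lam * x)) x =
      -lam ^ m * hyperBessel m ν (lam * x) := by
  have hxc : (x : ℂ) ≠ 0 := by exact_mod_cast hx
  simp only [hyperBessel_eq_powerSum]
  obtain ⟨hE, h⟩ := opList_powerSum (besselList m ν) (besselCoeff_entire hm hν) m lam
  have hlen : (besselList m ν).length = m := by simp [besselList]
  have hz : symbol (besselList m ν) (m * ((0 : ℕ) : ℂ)) = 0 := by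
    rw [symbol_besselList m hm]; simp
  rw [hyperBesselOp_eq m hm, h x hx, powerSum_eq_add hE, hlen, hz, zero_mul, zero_add,
    funext (besselCoeff_succ hm hν)]
  have hneg : powerSum (fun n => -besselCoeff m ν n) ((lam * x) ^ m) =
      -powerSum (besselCoeff m ν) ((lam * x) ^ m) := by
    simp only [powerSum, neg_mul, tsum_neg]
  rw [hneg, mul_pow]
  have : (x : ℂ) ^ m ≠ 0 := pow_ne_zero _ hxc
  field_simp

theorem hyperBessel_zero {m : ℕ} {ν : ℕ → ℝ} (hm : 2 ≤ m)
    (hν : ∀ k, 1 ≤ k → k ≤ m - 1 → ν k ≥ -1 + (k : ℝ) / m) : hyperBessel m ν 0 = 1 := by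
  rw [hyperBessel_eq_powerSum, powerSum_eq_add (besselCoeff_entire hm hν), besselCoeff_zero hm hν,
    zero_pow (by omega), zero_mul, add_zero]

/-- Since `𝒥_{ν,m}(λ x) = 1 + (λ x) ^ m * K x` with `K` smooth, the Leibniz rule kills all
derivatives of order `1, …, m - 1` at the origin. -/
theorem hyperBessel_iteratedDeriv {m : ℕ} {ν : ℕ → ℝ} (hm : 2 ≤ m)
    (hν : ∀ k, 1 ≤ k → k ≤ m - 1 → ν k ≥ -1 + (k : ℝ) / m)
    (lam : ℂ) (j : ℕ) (h1 : 1 ≤ j) (h2 : j ≤ m - 1) :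
    iteratedDeriv j (fun x : ℝ => hyperBessel m ν (lam * x)) 0 = 0 := by
  have hE := besselCoeff_entire hm hν
  have hk := powerSum_contDiff hE.shift m lam
  set K : ℝ → ℂ := fun x => powerSum (fun n => besselCoeff m ν (n + 1)) ((lam * x) ^ m) with hK
  have hfun : (fun x : ℝ => hyperBessel m ν (lam * x)) =
      fun x : ℝ => 1 + (lam * (x : ℂ)) ^ m * K x := by
    funext x
    rw [hyperBessel_eq_powerSum, powerSum_eq_add hE, besselCoeff_zero hm hν]
  have hpow : ContDiff ℝ (⊤ : ℕ∞) fun x : ℝ => (lam * (x : ℂ)) ^ m :=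
    (contDiff_const.mul Complex.ofRealCLM.contDiff).pow m
  -- `x ↦ (λx)^m` vanishes to order `m` at the origin.
  have hvan : ∀ i n : ℕ, i < n → ∀ a : ℂ,
      iteratedDeriv i (fun x : ℝ => a * (x : ℂ) ^ n) 0 = 0 := by
    intro i
    induction i with
    | zero => intro n hn a; simp [hn.ne']
    | succ i ih =>
      intro n hn a
      have hd : deriv (fun x : ℝ => a * (x : ℂ) ^ n) = fun x : ℝ => (a * n) * (x : ℂ) ^ (n - 1) := by
        funext x
        have := (((hasDerivAt_pow n (x : ℂ)).const_mul a).comp_ofReal).deriv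
        rw [this, mul_assoc]
      rw [iteratedDeriv_succ', hd]
      exact ih (n - 1) (by omega) _
  rw [hfun, iteratedDeriv_const_add (by omega), iteratedDeriv_fun_mul
    (hpow.contDiffAt.of_le (by exact_mod_cast le_top))
    (hk.contDiffAt.of_le (by exact_mod_cast le_top))]
  refine Finset.sum_eq_zero fun i hi => ?_
  have hi' : i < m := by have := Finset.mem_range.1 hi; omega
  simp only [mul_pow]
  rw [hvan i m hi' (lam ^ m)]
  simp

/-- `f(x) = 𝒥_{ν,m}(λx)` is the unique `C^∞` solution on `ℝ` of the singular initial value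
problem `B_m f = -λ^m f` (for `x ≠ 0`), `f(0) = 1`, `f^{(1)}(0) = ⋯ = f^{(m-1)}(0) = 0`. -/
theorem hyperBessel_ivp (m : ℕ) (hm : 2 ≤ m) (ν : ℕ → ℝ)
    (hν : ∀ k, 1 ≤ k → k ≤ m - 1 → ν k ≥ -1 + (k : ℝ) / m) (lam : ℂ) :
    ContDiff ℝ (⊤ : ℕ∞) (fun x : ℝ => hyperBessel m ν (lam * x)) ∧
    (∀ x : ℝ, x ≠ 0 →
      hyperBesselOp m ν (fun x : ℝ => hyperBessel m ν (lam * x)) x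
        = -lam ^ m * hyperBessel m ν (lam * x)) ∧
    hyperBessel m ν (lam * (0 : ℝ)) = 1 ∧
    (∀ j, 1 ≤ j → j ≤ m - 1 →
      iteratedDeriv j (fun x : ℝ => hyperBessel m ν (lam * x)) 0 = 0) ∧
    (∀ f : ℝ → ℂ, ContDiff ℝ (⊤ : ℕ∞) f →
      (∀ x : ℝ, x ≠ 0 → hyperBesselOp m ν f x = -lam ^ m * f x) →
      f 0 = 1 →
      (∀ j, 1 ≤ j → j ≤ m - 1 → iteratedDeriv j f 0 = 0) →
      ∀ x : ℝ, f x = hyperBessel m ν (lam * x)) := by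
  have hsm := hyperBessel_contDiff hm hν lam
  have hode := hyperBessel_ode hm hν lam
  have h0 : hyperBessel m ν (lam * (0 : ℝ)) = 1 := by
    rw [Complex.ofReal_zero, mul_zero]; exact hyperBessel_zero hm hν
  have hder := hyperBessel_iteratedDeriv hm hν lam
  refine ⟨hsm, hode, h0, hder, fun f hf hfode hf0 hfder x => ?_⟩
  have hlen : (besselList m ν).length = m := by simp [besselList]
  refine sub_eq_zero.1 (eq_zero_of_flat (g := fun y : ℝ => f y - hyperBessel m ν (lam * y))
    (besselList m ν) (by omega) (besselList_nonneg hm hν) (hf.sub hsm) (fun i hi => ?_)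
    (-lam ^ m) (fun y hy => ?_) x)
  · rw [iteratedDeriv_fun_sub (hf.contDiffAt.of_le (by exact_mod_cast le_top))
      (hsm.contDiffAt.of_le (by exact_mod_cast le_top))]
    rcases Nat.eq_zero_or_pos i with rfl | hi0
    · rw [iteratedDeriv_zero, iteratedDeriv_zero, hf0, h0, sub_self]
    · rw [hfder i hi0 (by omega), hder i hi0 (by omega), sub_self]
  · rw [opList_sub _ hf hsm hy, ← hyperBesselOp_eq m hm, ← hyperBesselOp_eq m hm, hfode y hy,
      hode y hy, mul_sub]
end

section
/- Let m ≥ 2 be an integer, ν = (ν_1, …, ν_{m-1}) ∈ ℝ^{m-1} with each ν_k > -1, and let 1 ≤ k ≤ m-1 be an index with ν_k ≠ 0 and ν_k - 1 > -1 - 1 (so that 𝒥_{ν - e_k,m} is defined). Then for all x ≠ 0 the normalized hyper-Bessel function satisfies (d/dx) 𝒥_{ν,m}(x) + (mν_k/x) 𝒥_{ν,m}(x) = (mν_k/x) 𝒥_{ν - e_k, m}(x), where e_k is the k-th standard basis vector of ℝ^{m-1}. -/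
/-- The `n`-th term of the series defining `hyperBessel m ν x`. -/
noncomputable def hyperBesselTerm (m : ℕ) (ν : ℕ → ℝ) (n : ℕ) (x : ℂ) : ℂ :=
  (-1) ^ n *
    (∏ k ∈ Finset.Icc 1 (m - 1),
      ((Real.Gamma (ν k + 1) / Real.Gamma (ν k + n + 1) : ℝ) : ℂ)) *
    (x / m) ^ (n * m) / (Nat.factorial n : ℂ)

lemma gamma_ratio_nonneg {a : ℝ} (ha : -1 < a) (n : ℕ) :
    0 ≤ Real.Gamma (a + 1) / Real.Gamma (a + n + 1) := by
  have hn : (0 : ℝ) ≤ n := n.cast_nonneg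
  exact div_nonneg (Real.Gamma_pos_of_pos (by linarith)).le
    (Real.Gamma_pos_of_pos (by linarith)).le

/-- Geometric bound on the Gamma ratio, which equals `∏_{i=1}^{n} (a + i)⁻¹`. -/
lemma gamma_ratio_le {a : ℝ} (ha : -1 < a) (n : ℕ) :
    Real.Gamma (a + 1) / Real.Gamma (a + n + 1) ≤ (a + 1)⁻¹ ^ n := by
  have ha' : 0 < a + 1 := by linarith
  induction n with
  | zero => simp [(Real.Gamma_pos_of_pos ha').ne']
  | succ n ih =>
    have hn : (0 : ℝ) ≤ n := n.cast_nonneg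
    have hpos : 0 < a + n + 1 := by linarith
    have hG : Real.Gamma (a + (n + 1 : ℕ) + 1) = (a + n + 1) * Real.Gamma (a + n + 1) := by
      rw [← Real.Gamma_add_one hpos.ne']
      push_cast
      ring_nf
    have hsplit : Real.Gamma (a + 1) / ((a + n + 1) * Real.Gamma (a + n + 1))
        = Real.Gamma (a + 1) / Real.Gamma (a + n + 1) * (a + n + 1)⁻¹ := by
      rw [mul_comm, ← div_div, div_eq_mul_inv _ (a + n + 1)]
    rw [hG, hsplit, pow_succ]
    have hinv : (a + n + 1)⁻¹ ≤ (a + 1)⁻¹ := inv_anti₀ ha' (by linarith)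
    exact mul_le_mul ih hinv (inv_nonneg.2 hpos.le) (by positivity)

/-- Domination of the series by an exponential series, uniformly on `‖x‖ ≤ R`. -/
lemma norm_hyperBesselTerm_le {m : ℕ} {ν : ℕ → ℝ}
    (hν : ∀ k, 1 ≤ k → k ≤ m - 1 → ν k > -1) {R : ℝ} {x : ℂ} (hx : ‖x‖ ≤ R) (n : ℕ) :
    ‖hyperBesselTerm m ν n x‖ ≤
      ((∏ j ∈ Finset.Icc 1 (m - 1), (ν j + 1)⁻¹) * (R / m) ^ m) ^ n / (Nat.factorial n : ℝ) := by
  have hν' : ∀ j ∈ Finset.Icc 1 (m - 1), -1 < ν j := fun j hj =>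
    hν j (Finset.mem_Icc.1 hj).1 (Finset.mem_Icc.1 hj).2
  have hprod : ‖∏ j ∈ Finset.Icc 1 (m - 1),
      ((Real.Gamma (ν j + 1) / Real.Gamma (ν j + n + 1) : ℝ) : ℂ)‖
      ≤ (∏ j ∈ Finset.Icc 1 (m - 1), (ν j + 1)⁻¹) ^ n := by
    rw [norm_prod, ← Finset.prod_pow]
    refine Finset.prod_le_prod (fun _ _ => norm_nonneg _) fun j hj => ?_
    rw [Complex.norm_real, Real.norm_of_nonneg (gamma_ratio_nonneg (hν' j hj) n)]
    exact gamma_ratio_le (hν' j hj) n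
  have hpow : ‖(x / m) ^ (n * m)‖ ≤ ((R / m) ^ m) ^ n := by
    rw [norm_pow, norm_div, Complex.norm_natCast, mul_comm n m, pow_mul]
    gcongr
  have hB : 0 ≤ ∏ j ∈ Finset.Icc 1 (m - 1), (ν j + 1)⁻¹ :=
    Finset.prod_nonneg fun j hj => inv_nonneg.2 (by linarith [hν' j hj])
  unfold hyperBesselTerm
  rw [norm_div, norm_mul, norm_mul, norm_pow, norm_neg, norm_one, one_pow, one_mul,
    Complex.norm_natCast, mul_pow]
  gcongr

lemma hasDerivAt_hyperBesselTerm {m : ℕ} (hm : m ≠ 0) (ν : ℕ → ℝ) (n : ℕ) {x : ℂ} (hx : x ≠ 0) :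
    HasDerivAt (hyperBesselTerm m ν n) (n * m / x * hyperBesselTerm m ν n x) x := by
  have hm' : (m : ℂ) ≠ 0 := Nat.cast_ne_zero.2 hm
  have h := (((((hasDerivAt_id x).div_const (m : ℂ)).pow (n * m)).const_mul
    ((-1) ^ n * (∏ k ∈ Finset.Icc 1 (m - 1),
      ((Real.Gamma (ν k + 1) / Real.Gamma (ν k + n + 1) : ℝ) : ℂ)))).div_const
    (Nat.factorial n : ℂ))
  refine h.congr_deriv ?_
  unfold hyperBesselTerm
  -- The exponent `n * m - 1` truncates when `n = 0`, where both sides vanish.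
  rcases Nat.eq_zero_or_pos n with rfl | hn
  · simp
  · obtain ⟨p, hp⟩ : ∃ p, n * m = p + 1 :=
      Nat.exists_eq_succ_of_ne_zero (Nat.mul_ne_zero hn.ne' hm)
    have hc : (n : ℂ) * m = ((n * m : ℕ) : ℂ) := by push_cast; rfl
    rw [hc, hp, Nat.add_sub_cancel, pow_succ]
    simp only [id]
    field_simp

/-- Lowering `ν_k` by one multiplies the `n`-th term by `(n + ν_k) / ν_k`. -/
lemma add_mul_hyperBesselTerm {m : ℕ} {ν : ℕ → ℝ} {k : ℕ} (hk : k ∈ Finset.Icc 1 (m - 1))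
    (hνk : ν k ≠ 0) (hνk' : -1 < ν k) (n : ℕ) (x : ℂ) :
    ((n : ℂ) + ν k) * hyperBesselTerm m ν n x
      = ν k * hyperBesselTerm m (fun j => if j = k then ν j - 1 else ν j) n x := by
  have hne : ν k + n ≠ 0 := by
    rcases Nat.eq_zero_or_pos n with rfl | hn
    · simpa using hνk
    · have : (1 : ℝ) ≤ n := by exact_mod_cast hn
      linarith
  have hratio : (n + ν k) * (Real.Gamma (ν k + 1) / Real.Gamma (ν k + n + 1))
      = ν k * (Real.Gamma (ν k - 1 + 1) / Real.Gamma (ν k - 1 + n + 1)) := by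
    rw [show ν k - 1 + 1 = ν k by ring, show ν k - 1 + n + 1 = ν k + n by ring,
      Real.Gamma_add_one hνk, Real.Gamma_add_one hne, add_comm (n : ℝ), mul_div_assoc',
      mul_div_mul_left _ _ hne, mul_div_assoc]
  have hratioC := congrArg (fun r : ℝ => (r : ℂ)) hratio
  simp only [Complex.ofReal_mul, Complex.ofReal_add, Complex.ofReal_natCast] at hratioC
  unfold hyperBesselTerm
  rw [← Finset.mul_prod_erase _ _ hk, ← Finset.mul_prod_erase _ _ hk]
  have herase : ∏ j ∈ (Finset.Icc 1 (m - 1)).erase k,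
      ((Real.Gamma ((if j = k then ν j - 1 else ν j) + 1) /
        Real.Gamma ((if j = k then ν j - 1 else ν j) + n + 1) : ℝ) : ℂ)
      = ∏ j ∈ (Finset.Icc 1 (m - 1)).erase k,
        ((Real.Gamma (ν j + 1) / Real.Gamma (ν j + n + 1) : ℝ) : ℂ) :=
    Finset.prod_congr rfl fun j hj => by rw [if_neg (Finset.ne_of_mem_erase hj)]
  rw [herase]
  beta_reduce
  rw [if_pos rfl]
  set P := ∏ j ∈ (Finset.Icc 1 (m - 1)).erase k,
    ((Real.Gamma (ν j + 1) / Real.Gamma (ν j + n + 1) : ℝ) : ℂ)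
  linear_combination ((-1) ^ n * P * (x / m) ^ (n * m) / (Nat.factorial n : ℂ)) * hratioC

/-- The differential recurrence relation
`(d/dx) 𝒥_{ν,m}(x) + (mν_k/x) 𝒥_{ν,m}(x) = (mν_k/x) 𝒥_{ν-e_k,m}(x)` for `x ≠ 0`. -/
theorem hyperBessel_shift_recurrence (m : ℕ) (hm : 2 ≤ m) (ν : ℕ → ℝ)
    (hν : ∀ k, 1 ≤ k → k ≤ m - 1 → ν k > -1)
    (k : ℕ) (hk1 : 1 ≤ k) (hk2 : k ≤ m - 1) (hνk : ν k ≠ 0) (hνk' : ν k - 1 > -1 - 1)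
    (x : ℂ) (hx : x ≠ 0) :
    deriv (hyperBessel m ν) x + ((m * ν k : ℝ) : ℂ) / x * hyperBessel m ν x
      = ((m * ν k : ℝ) : ℂ) / x *
          hyperBessel m (fun j => if j = k then ν j - 1 else ν j) x := by
  have hm0 : m ≠ 0 := by omega
  have hx_mem : x ∈ Metric.ball (0 : ℂ) (‖x‖ + 1) := by simp
  have hbound : ∀ (n : ℕ) (w : ℂ), w ∈ Metric.ball (0 : ℂ) (‖x‖ + 1) →
      ‖hyperBesselTerm m ν n w‖ ≤ ((∏ j ∈ Finset.Icc 1 (m - 1), (ν j + 1)⁻¹) *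
        ((‖x‖ + 1) / m) ^ m) ^ n / (Nat.factorial n : ℝ) := fun n w hw =>
    norm_hyperBesselTerm_le hν (mem_ball_zero_iff.1 hw).le n
  have hsummable := Real.summable_pow_div_factorial
    ((∏ j ∈ Finset.Icc 1 (m - 1), (ν j + 1)⁻¹) * ((‖x‖ + 1) / m) ^ m)
  have hderiv : HasSum (fun n => deriv (hyperBesselTerm m ν n) x) (deriv (hyperBessel m ν) x) :=
    Complex.hasSum_deriv_of_summable_norm hsummable
      (fun n => by unfold hyperBesselTerm; fun_prop) Metric.isOpen_ball hbound hx_mem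
  have hsum : HasSum (fun n => hyperBesselTerm m ν n x) (hyperBessel m ν x) :=
    (Summable.of_norm_bounded hsummable fun n => hbound n x hx_mem).hasSum
  rw [← (hderiv.add (hsum.mul_left (((m * ν k : ℝ) : ℂ) / x))).tsum_eq]
  change _ = _ * ∑' n, hyperBesselTerm m (fun j => if j = k then ν j - 1 else ν j) n x
  rw [← tsum_mul_left]
  refine tsum_congr fun n => ?_
  rw [(hasDerivAt_hyperBesselTerm hm0 ν n hx).deriv]
  have h := add_mul_hyperBesselTerm (Finset.mem_Icc.2 ⟨hk1, hk2⟩) hνk (hν k hk1 hk2) n x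
  push_cast
  linear_combination ((m : ℂ) / x) * h
end
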